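/- For a unit-energy zonal window h (⟨h,h⟩ = 1) and band-limited f, the SLSHT distribution conserves a weighted energy: Σ_n ∫_{S²} |g_f(ŷ; n)|² ds(ŷ) = ∫_{S²} |f(x̂)|² · E_h(x̂) ds(x̂) where E_h(x̂) = ∫_{S²} |(D(ŷ)h)(x̂)|² ds(ŷ); moreover, since h is zonal, E_h is a constant, equal to 4π Σ_p |h_p^0|²/(2p+1) · (2p+1)/(4π) summed appropriately, i.e., E_h = Σ_p |h_p^0|² = 1 after suitable normalization of the rotation measure (up to the constant factor arising from integrating over S² instead of SO(3)). -/

import Mathlib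

open Real MeasureTheory intervalIntegral ComplexConjugate

noncomputable section

/-- Associated Legendre function `P_ℓ^m` for nonnegative order `m`. -/
def assocLegendrePos (l m : ℕ) (x : ℝ) : ℝ :=
  ((-1 : ℝ) ^ m / ((2 : ℝ) ^ l * (Nat.factorial l : ℝ))) *
    (1 - x ^ 2) ^ ((m : ℝ) / 2) *
    iteratedDeriv (l + m) (fun t : ℝ => (t ^ 2 - 1) ^ l) x

/-- Associated Legendre function `P_ℓ^m` for integer order `m`. -/
def assocLegendre (l : ℕ) (m : ℤ) (x : ℝ) : ℝ :=
  if 0 ≤ m then assocLegendrePos l m.toNat x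
  else ((-1 : ℝ) ^ (-m).toNat *
    ((Nat.factorial (l - (-m).toNat) : ℝ) / (Nat.factorial (l + (-m).toNat) : ℝ))) *
    assocLegendrePos l (-m).toNat x

/-- Spherical harmonic normalization factor `N_ℓ^m`. -/
def shNorm (l : ℕ) (m : ℤ) : ℝ :=
  Real.sqrt ((2 * l + 1) / (4 * π) *
    ((Nat.factorial ((l : ℤ) - m).toNat : ℝ) / (Nat.factorial ((l : ℤ) + m).toNat : ℝ)))

/-- Spherical harmonic `Y_ℓ^m(θ, φ)`. -/
def sphHarm (l : ℕ) (m : ℤ) (θ φ : ℝ) : ℂ :=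
  ((shNorm l m * assocLegendre l m (Real.cos θ) : ℝ) : ℂ) *
    Complex.exp (Complex.I * (m : ℂ) * (φ : ℂ))

/-- Spherical harmonic coefficient `⟨f, Y_ℓ^m⟩ = ∫_{S²} f conj(Y_ℓ^m) ds`. -/
def shc (f : ℝ → ℝ → ℂ) (l : ℕ) (m : ℤ) : ℂ :=
  ∫ θ in (0 : ℝ)..π,
    (∫ φ in (0 : ℝ)..(2 * π), f θ φ * conj (sphHarm l m θ φ)) * ((Real.sin θ : ℝ) : ℂ)

/-- Degree `ℓ = ⌊√n⌋` of the single index `n`. -/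
def deg (n : ℕ) : ℕ := Nat.sqrt n

/-- Order `m = n − ⌊√n⌋² − ⌊√n⌋` of the single index `n`. -/
def ord (n : ℕ) : ℤ := (n : ℤ) - (Nat.sqrt n : ℤ) ^ 2 - (Nat.sqrt n : ℤ)

/-- Spherical harmonic `Y_n` under the index bijection `n = ℓ² + ℓ + m`. -/
def sphHarmIdx (n : ℕ) (θ φ : ℝ) : ℂ := sphHarm (deg n) (ord n) θ φ

/-- Spherical harmonic triple product `T(c; r; n) = ∫ Y_c Y_r conj(Y_n) ds`. -/
def tripleProd (c r n : ℕ) : ℂ :=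
  shc (fun θ φ => sphHarmIdx r θ φ * sphHarmIdx c θ φ) (deg n) (ord n)

open Polynomial in
/-- derivatives of `(X²-1)^l` -/
def WW (l k : ℕ) : Polynomial ℝ := derivative^[k] ((X ^ 2 - 1) ^ l)

open Polynomial in
lemma WW_deriv (l k : ℕ) : derivative (WW l k) = WW l (k + 1) := by
  simp only [WW, Function.iterate_succ_apply']

open Polynomial in
lemma WW_iter (l k : ℕ) (x : ℝ) :
    iteratedDeriv k (fun t : ℝ => (t ^ 2 - 1) ^ l) x = (WW l k).eval x := by
  induction k generalizing x with
  | zero => simp [WW]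
  | succ k ih =>
    rw [iteratedDeriv_succ, funext ih, Polynomial.deriv, WW_deriv]

open Polynomial in
lemma WW_rec0 (l : ℕ) : (X ^ 2 - 1) * WW l 1 = (2 * l : ℝ[X]) * X * WW l 0 := by
  simp only [WW, Function.iterate_one, Function.iterate_zero, id]
  cases l with
  | zero => simp
  | succ l =>
    rw [derivative_pow_succ]
    simp
    ring

open Polynomial in
lemma WW_rec1 (l n : ℕ) : (X ^ 2 - 1) * WW l (n + 2) + (2 * (n + 1) : ℝ[X]) * X * WW l (n + 1)
    + ((n + 1) * n : ℝ[X]) * WW l n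
    = (2 * l : ℝ[X]) * X * WW l (n + 1) + (2 * l * (n + 1) : ℝ[X]) * WW l n := by
  induction n with
  | zero =>
    have h := congrArg derivative (WW_rec0 l)
    simp [derivative_mul, WW_deriv] at h
    simp
    linear_combination h
  | succ n ih =>
    have h := congrArg derivative ih
    simp [derivative_mul, WW_deriv] at h
    push_cast
    linear_combination h

open Polynomial in
lemma WW_rec (l m : ℕ) : (1 - X ^ 2) * WW l (l + m + 2) =
    (2 * (m + 1) : ℝ[X]) * X * WW l (l + m + 1)
      - ((l + m + 1) * (l - m) : ℝ[X]) * WW l (l + m) := by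
  have h := WW_rec1 l (l + m)
  push_cast at h
  linear_combination -h

/-- factorial ratio -/
def aa (l m : ℕ) : ℝ := ((l - m).factorial : ℝ) / ((l + m).factorial : ℝ)

lemma aa_zero (l : ℕ) : aa l 0 = 1 := by
  simp [aa, Nat.factorial_ne_zero]

lemma aa_pos (l m : ℕ) : 0 < aa l m := by
  unfold aa; positivity

lemma aa_succ (l m : ℕ) (h : m < l) : aa l (m + 1) * ((l + m + 1) * (l - m)) = aa l m := by
  obtain ⟨d, rfl⟩ := Nat.exists_eq_add_of_lt h
  unfold aa
  rw [show m + d + 1 - (m + 1) = d by omega, show m + d + 1 - m = d + 1 by omega,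
    show m + d + 1 + (m + 1) = (m + d + 1 + m) + 1 by omega, Nat.factorial_succ d,
    Nat.factorial_succ (m + d + 1 + m)]
  have := Nat.factorial_ne_zero (m + d + 1 + m)
  have : ((m + d + 1 + m : ℕ) : ℝ) + 1 ≠ 0 := by positivity
  push_cast at this ⊢
  field_simp
  ring

open Polynomial in
/-- the polynomial sum -/
def SS (l M : ℕ) : ℝ[X] := WW l l ^ 2 +
  2 * ∑ m ∈ Finset.range M, C (aa l (m + 1)) * ((1 - X ^ 2) ^ (m + 1) * WW l (l + (m + 1)) ^ 2)

open Polynomial in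
lemma SS_deriv (l M : ℕ) (h : M ≤ l) : derivative (SS l M) =
    2 * C (aa l M) * ((1 - X ^ 2) ^ M * WW l (l + M) * WW l (l + M + 1)) := by
  induction M with
  | zero =>
    have hC : (C 2 : ℝ[X]) = 2 := map_ofNat C 2
    simp [SS, aa_zero, WW_deriv, derivative_pow, hC]
    ring
  | succ M ih =>
    have e : SS l (M + 1) = SS l M + 2 * (C (aa l (M + 1)) *
       ((1 - X ^ 2) ^ (M + 1) * WW l (l + (M + 1)) ^ 2)) := by
      simp only [SS, Finset.sum_range_succ]; ring
    have h1 := WW_rec l M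
    have h2 : C (aa l (M + 1)) * ((l + M + 1) * (l - M) : ℝ[X]) = C (aa l M) := by
      rw [← aa_succ l M (by omega)]; simp
    rw [e, derivative_add, ih (by omega), ← h2, ← add_assoc l M 1]
    have hC : (C 2 : ℝ[X]) = 2 := map_ofNat C 2
    simp [derivative_mul, derivative_pow, WW_deriv, hC]
    linear_combination (2 * C (aa l (M + 1)) * (1 - X ^ 2) ^ M * WW l (l + M + 1)) * h1

open Polynomial in
lemma WW_natDegree0 (l : ℕ) : ((X ^ 2 - 1 : ℝ[X]) ^ l).natDegree = 2 * l := by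
  rw [natDegree_pow, show (X ^ 2 - 1 : ℝ[X]) = X ^ 2 - C 1 by simp, natDegree_X_pow_sub_C]
  ring

open Polynomial in
lemma WW_one (l : ℕ) : (WW l l).eval 1 = 2 ^ l * l.factorial := by
  have h := aeval_iterate_derivative_self (A := ℝ) ((X ^ 2 - 1 : ℝ[X]) ^ l) l 1 (p' := (X + 1) ^ l)
    (by simp; rw [← mul_pow]; congr 1; ring)
  simp [WW, coe_aeval_eq_eval] at h ⊢
  rw [h]; norm_num; ring

open Polynomial in
lemma SS_const (l : ℕ) (x : ℝ) : (SS l l).eval x = (2 ^ l * l.factorial) ^ 2 := by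
  have h : derivative (SS l l) = 0 := by
    rw [SS_deriv l l le_rfl]
    have : WW l (l + l + 1) = 0 := by
      apply iterate_derivative_eq_zero
      rw [WW_natDegree0]; omega
    rw [this]; simp
  have h2 := eq_C_of_derivative_eq_zero h
  have h3 : (SS l l).eval x = (SS l l).eval 1 := by
    rw [h2]; simp
  rw [h3]
  simp [SS, eval_finsetSum, WW_one]

/-- integral over [-1,1] -/
def JJ (p : Polynomial ℝ) : ℝ := ∫ x in (-1 : ℝ)..1, p.eval x

open Polynomial in
lemma JJ_deriv (p : ℝ[X]) : JJ (derivative p) = p.eval 1 - p.eval (-1) := by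
  unfold JJ
  apply intervalIntegral.integral_eq_sub_of_hasDerivAt (f := fun x => p.eval x)
  · intro x _; exact p.hasDerivAt x
  · exact (derivative p).continuous.intervalIntegrable _ _

open Polynomial in
lemma JJ_add (p q : ℝ[X]) : JJ (p + q) = JJ p + JJ q := by
  simp only [JJ, eval_add]
  exact intervalIntegral.integral_add (p.continuous.intervalIntegrable _ _)
    (q.continuous.intervalIntegrable _ _)

open Polynomial in
lemma JJ_C (c : ℝ) (p : ℝ[X]) : JJ (C c * p) = c * JJ p := by
  simp [JJ]

open Polynomial in
lemma JJ_sum (s : Finset ℕ) (p : ℕ → ℝ[X]) : JJ (∑ i ∈ s, p i) = ∑ i ∈ s, JJ (p i) := by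
  induction s using Finset.cons_induction with
  | empty => simp [JJ]
  | cons a s ha ih => rw [Finset.sum_cons, Finset.sum_cons, JJ_add, ih]

open Polynomial in
/-- inner products of derivatives -/
def II (l l' m : ℕ) : ℝ := JJ ((1 - X ^ 2) ^ m * (WW l (l + m) * WW l' (l' + m)))

lemma II_comm (l l' m : ℕ) : II l l' m = II l' l m := by
  unfold II; congr 2; ring

open Polynomial in
lemma II_succ (l l' m : ℕ) : II l l' (m + 1) = ((l + m + 1) * (l - m)) * II l l' m := by
  have h := JJ_deriv ((1 - X ^ 2) ^ (m + 1) * WW l (l + m + 1) * WW l' (l' + m))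
  have e : derivative ((1 - X ^ 2) ^ (m + 1) * WW l (l + m + 1) * WW l' (l' + m)) =
      C (-((l + m + 1) * (l - m) : ℝ)) * ((1 - X ^ 2) ^ m * (WW l (l + m) * WW l' (l' + m)))
       + (1 - X ^ 2) ^ (m + 1) * (WW l (l + (m + 1)) * WW l' (l' + (m + 1))) := by
    have h1 := WW_rec l m
    simp [derivative_mul, derivative_pow, WW_deriv, ← add_assoc, map_ofNat C 2]
    linear_combination ((1 - X ^ 2) ^ m * WW l' (l' + m)) * h1
  rw [e, JJ_add, JJ_C] at h
  simp at h
  unfold II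
  linarith

lemma II_aa (l m : ℕ) (h : m ≤ l) : aa l m * II l l m = II l l 0 := by
  induction m with
  | zero => simp [aa_zero]
  | succ m ih =>
    rw [← ih (by omega), II_succ, ← aa_succ l m (by omega)]; ring

lemma II_ne (l l' m : ℕ) (h : l ≠ l') : II l l' m = 0 := by
  induction m with
  | zero =>
    have h1 := II_succ l l' 0
    have h2 := II_succ l' l 0
    rw [II_comm l' l, II_comm l' l] at h2
    have h3 : ((l : ℝ) - l') * (l + l' + 1) * II l l' 0 = 0 := by
      push_cast at h1 h2
      linear_combination h2 - h1
    have h4 : (l : ℝ) - l' ≠ 0 := sub_ne_zero.mpr (by exact_mod_cast h)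
    have h5 : (l : ℝ) + l' + 1 ≠ 0 := by positivity
    simpa [h4, h5] using h3
  | succ m ih => rw [II_succ, ih, mul_zero]

open Polynomial in
lemma II_norm (l : ℕ) : (2 * l + 1) * II l l 0 = 2 * (2 ^ l * l.factorial) ^ 2 := by
  have h : JJ (SS l l) = 2 * (2 ^ l * l.factorial) ^ 2 := by
    simp only [JJ, SS_const]
    simp; norm_num
  rw [← h]
  have e : SS l l = (1 - X ^ 2) ^ 0 * (WW l (l + 0) * WW l (l + 0)) + C 2 *
    ∑ m ∈ Finset.range l, C (aa l (m + 1)) * ((1 - X ^ 2) ^ (m + 1) *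
       (WW l (l + (m + 1)) * WW l (l + (m + 1)))) := by
    simp only [SS]
    simp only [pow_zero, add_zero, one_mul, ← sq]
    rfl
  rw [e, JJ_add, JJ_C, JJ_sum]
  have : ∀ m ∈ Finset.range l, JJ (C (aa l (m + 1)) * ((1 - X ^ 2) ^ (m + 1) *
       (WW l (l + (m + 1)) * WW l (l + (m + 1))))) = II l l 0 := by
    intro m hm
    rw [JJ_C, ← II_aa l (m + 1) (by simp at hm; omega)]; rfl
  rw [Finset.sum_congr rfl this]
  simp only [Finset.sum_const, Finset.card_range, nsmul_eq_mul]
  unfold II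
  ring

open Polynomial in
lemma JJ_cos (p : ℝ[X]) : ∫ θ in (0 : ℝ)..π, p.eval (cos θ) * sin θ = JJ p := by
  have h := intervalIntegral.integral_comp_mul_deriv (a := 0) (b := π) (f := fun θ => cos θ)
    (f' := fun θ => - sin θ) (g := fun x => p.eval x)
    (fun x _ => hasDerivAt_cos x) (by fun_prop) p.continuous
  simp only [Function.comp, cos_zero, cos_pi] at h
  rw [intervalIntegral.integral_symm (-1) 1] at h
  simp only [mul_neg, intervalIntegral.integral_neg] at h
  unfold JJ; linarith

open Polynomial in
lemma WW_natDegree_le (l q : ℕ) : (WW l (l + q)).natDegree ≤ l - q := by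
  refine (natDegree_iterate_derivative _ _).trans ?_
  rw [WW_natDegree0]; omega

open Polynomial in
lemma WW_coeff (l q : ℕ) (h : q ≤ l) : (WW l (l + q)).coeff (l - q) ≠ 0 := by
  unfold WW
  rw [coeff_iterate_derivative, show l - q + (l + q) = 2 * l by omega]
  have : ((X ^ 2 - 1 : ℝ[X]) ^ l).coeff (2 * l) = 1 := by
    rw [← WW_natDegree0 l]
    have : (X ^ 2 - 1 : ℝ[X]).Monic := by
      rw [show (X ^ 2 - 1 : ℝ[X]) = X ^ 2 - C 1 by simp]; exact monic_X_pow_sub_C _ (by norm_num)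
    exact (this.pow l)
  rw [this]
  have : (2 * l).descFactorial (l + q) ≠ 0 := by
    rw [Ne, Nat.descFactorial_eq_zero_iff_lt]; omega
  simpa using this

open Polynomial in
/-- any polynomial of degree ≤ d lies in a submodule containing the W's -/
lemma span_WW (U : Submodule ℝ ℝ[X]) (q D : ℕ) (hU : ∀ d ≤ D, WW (q + d) (q + d + q) ∈ U) :
    ∀ R : ℝ[X], R.natDegree ≤ D → R ∈ U := by
  have key : ∀ d ≤ D + 1, ∀ R : ℝ[X], R.degree < d → R ∈ U := by
    intro d
    induction d with
    | zero =>
      intro _ R hR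
      have : R = 0 := by simpa using hR
      rw [this]; exact U.zero_mem
    | succ d ih =>
      intro hd R hR
      set w := WW (q + d) (q + d + q) with hw
      have hc : w.coeff d ≠ 0 := by
        have := WW_coeff (q + d) q (by omega)
        simpa using this
      have hdeg : w.natDegree ≤ d := by
        have := WW_natDegree_le (q + d) q
        simpa using this
      have h1 : R - C (R.coeff d / w.coeff d) * w ∈ U := by
        apply ih (by omega)
        rw [degree_lt_iff_coeff_zero] at hR ⊢
        intro m hm
        rcases Nat.eq_or_lt_of_le hm with rfl | hm
        · simp [hc]
        · simp only [coeff_sub, coeff_C_mul]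
          rw [hR m hm, coeff_eq_zero_of_natDegree_lt (p := w) (n := m) (by omega)]; simp
      have h2 : C (R.coeff d / w.coeff d) * w ∈ U := by
        rw [← smul_eq_C_mul]
        exact U.smul_mem _ (hU d (by omega))
      have := U.add_mem h1 h2
      simpa using this
  intro R hR
  apply key (D + 1) le_rfl
  rw [degree_lt_iff_coeff_zero]
  intro m hm
  exact coeff_eq_zero_of_natDegree_lt (by omega)

/-- radial coefficient -/
def kap (l : ℕ) (m : ℤ) : ℝ :=
  if 0 ≤ m then shNorm l m * ((-1 : ℝ) ^ m.natAbs / ((2 : ℝ) ^ l * (Nat.factorial l : ℝ)))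
  else shNorm l m * (((-1 : ℝ) ^ m.natAbs * aa l m.natAbs) *
    ((-1 : ℝ) ^ m.natAbs / ((2 : ℝ) ^ l * (Nat.factorial l : ℝ))))

lemma sphHarm_eq (l : ℕ) (m : ℤ) (θ φ : ℝ) : sphHarm l m θ φ =
    ((kap l m * (|sin θ| ^ m.natAbs * (WW l (l + m.natAbs)).eval (cos θ)) : ℝ) : ℂ) *
      Complex.exp (Complex.I * (m : ℂ) * (φ : ℂ)) := by
  have hs : ∀ q : ℕ, (1 - cos θ ^ 2) ^ ((q : ℝ) / 2) = |sin θ| ^ q := by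
    intro q
    rw [← sin_sq, ← sq_abs, ← Real.rpow_natCast, ← Real.rpow_mul (abs_nonneg _),
      ← Real.rpow_natCast]
    congr 1; push_cast; ring
  unfold sphHarm assocLegendre kap aa
  congr 2
  by_cases h : 0 ≤ m
  · have e : m.toNat = m.natAbs := by omega
    rw [if_pos h, if_pos h, assocLegendrePos, e, WW_iter, hs]; ring
  · have e : (-m).toNat = m.natAbs := by omega
    rw [if_neg h, if_neg h, assocLegendrePos, e, WW_iter, hs]; ring

lemma kap_sq (l : ℕ) (m : ℤ) (h : m.natAbs ≤ l) : kap l m ^ 2 =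
    (2 * l + 1) / (4 * π) / (2 ^ l * l.factorial) ^ 2 * aa l m.natAbs := by
  have hn : shNorm l m ^ 2 = ((2 * l + 1) / (4 * π) *
    ((Nat.factorial ((l : ℤ) - m).toNat : ℝ) / (Nat.factorial ((l : ℤ) + m).toNat : ℝ))) := by
    unfold shNorm
    rw [Real.sq_sqrt (by positivity)]
  have h1 : ((-1 : ℝ) ^ m.natAbs) ^ 2 = 1 := by
    rw [← pow_mul, mul_comm, pow_mul]; simp
  have hpi := Real.pi_pos
  unfold kap
  by_cases h0 : 0 ≤ m
  · rw [if_pos h0, mul_pow, hn, div_pow, h1, show ((l : ℤ) - m).toNat = l - m.natAbs by omega,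
      show ((l : ℤ) + m).toNat = l + m.natAbs by omega, aa]
    field_simp
  · rw [if_neg h0, mul_pow, hn, mul_pow, mul_pow, div_pow, h1,
      show ((l : ℤ) - m).toNat = l + m.natAbs by omega,
      show ((l : ℤ) + m).toNat = l - m.natAbs by omega, aa]
    have := Nat.factorial_ne_zero (l - m.natAbs)
    have := Nat.factorial_ne_zero (l + m.natAbs)
    field_simp

lemma kap_ne (l : ℕ) (m : ℤ) (h : m.natAbs ≤ l) : kap l m ≠ 0 := by
  have h1 := kap_sq l m h
  have h2 := aa_pos l m.natAbs
  have hpi := Real.pi_pos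
  have : 0 < kap l m ^ 2 := by rw [h1]; positivity
  intro h; rw [h] at this; simp at this

lemma normSq_exp (m : ℤ) (φ : ℝ) :
    Complex.normSq (Complex.exp (Complex.I * (m : ℂ) * (φ : ℂ))) = 1 := by
  rw [Complex.normSq_eq_norm_sq, Complex.norm_exp]; simp

lemma sphHarm_continuous (l : ℕ) (m : ℤ) :
    Continuous (fun p : ℝ × ℝ => sphHarm l m p.1 p.2) := by
  simp only [sphHarm_eq]
  have := (WW l (l + m.natAbs)).continuous
  fun_prop

lemma abs_ord_le (n : ℕ) : (ord n).natAbs ≤ deg n := by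
  have h1 := Nat.sqrt_le' n
  have h2 := Nat.lt_succ_sqrt' n
  unfold ord deg
  zify at *
  rw [abs_le]
  constructor <;> nlinarith

lemma deg_block (L j : ℕ) (h : j < 2 * L + 1) : deg (L ^ 2 + j) = L :=
  Nat.sqrt_add_eq' L (by omega)

lemma ord_block (L j : ℕ) (h : j < 2 * L + 1) : ord (L ^ 2 + j) = (j : ℤ) - L := by
  have := deg_block L j h
  unfold deg at this
  unfold ord
  rw [this]; push_cast; ring

lemma sum_block (G : ℕ → ℝ) (L : ℕ) : ∑ n ∈ Finset.range ((L + 1) ^ 2), G n =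
    ∑ p ∈ Finset.range (L + 1), ∑ j ∈ Finset.range (2 * p + 1), G (p ^ 2 + j) := by
  induction L with
  | zero => simp
  | succ L ih =>
    rw [Finset.sum_range_succ, ← ih, show (L + 1 + 1) ^ 2 = (L + 1) ^ 2 + (2 * (L + 1) + 1) by ring,
      Finset.sum_range_add]

lemma sum_abs (G : ℕ → ℝ) (l : ℕ) : ∑ j ∈ Finset.range (2 * l + 1), G ((j : ℤ) - l).natAbs =
    G 0 + 2 * ∑ q ∈ Finset.range l, G (q + 1) := by
  rw [show 2 * l + 1 = l + (l + 1) by ring, Finset.sum_range_add, Finset.sum_range_succ']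
  have h1 : ∑ j ∈ Finset.range l, G ((j : ℤ) - l).natAbs = ∑ q ∈ Finset.range l, G (q + 1) := by
    rw [← Finset.sum_range_reflect]
    apply Finset.sum_congr rfl
    intro j hj
    simp at hj
    congr 1; omega
  have h2 : ∑ j ∈ Finset.range l, G (((l + (j + 1) : ℕ) : ℤ) - l).natAbs
      = ∑ q ∈ Finset.range l, G (q + 1) := by
    apply Finset.sum_congr rfl
    intro j hj
    congr 1; omega
  rw [h1, h2]; simp; ring

lemma normSq_sphHarm (l : ℕ) (m : ℤ) (h : m.natAbs ≤ l) (θ φ : ℝ) :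
    Complex.normSq (sphHarm l m θ φ) = (2 * l + 1) / (4 * π) / (2 ^ l * l.factorial) ^ 2 *
      (aa l m.natAbs * ((1 - cos θ ^ 2) ^ m.natAbs * (WW l (l + m.natAbs)).eval (cos θ) ^ 2)) := by
  rw [sphHarm_eq, Complex.normSq_mul, normSq_exp, Complex.normSq_ofReal, ← sq, mul_pow,
    kap_sq l m h, mul_pow (|sin θ| ^ m.natAbs), ← pow_mul |sin θ|, mul_comm m.natAbs 2,
    pow_mul |sin θ|, sq_abs, sin_sq]
  ring

/-- the addition identity -/
lemma addition (l : ℕ) (θ φ : ℝ) : ∑ j ∈ Finset.range (2 * l + 1),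
    Complex.normSq (sphHarm l ((j : ℤ) - l) θ φ) = (2 * l + 1) / (4 * π) := by
  have h1 : ∀ j ∈ Finset.range (2 * l + 1), Complex.normSq (sphHarm l ((j : ℤ) - l) θ φ) =
     (fun q : ℕ => (2 * l + 1) / (4 * π) / (2 ^ l * l.factorial) ^ 2 *
      (aa l q * ((1 - cos θ ^ 2) ^ q * (WW l (l + q)).eval (cos θ) ^ 2))) ((j : ℤ) - l).natAbs := by
    intro j hj
    simp at hj
    exact normSq_sphHarm _ _ (by omega) _ _
  rw [Finset.sum_congr rfl h1]
  refine (sum_abs (fun q : ℕ => (2 * l + 1) / (4 * π) / (2 ^ l * l.factorial) ^ 2 *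
      (aa l q * ((1 - cos θ ^ 2) ^ q * (WW l (l + q)).eval (cos θ) ^ 2))) l).trans ?_
  have h2 := SS_const l (cos θ)
  simp only [SS, Polynomial.eval_add, Polynomial.eval_mul, Polynomial.eval_pow,
    Polynomial.eval_finsetSum, Polynomial.eval_C, Polynomial.eval_sub, Polynomial.eval_one,
    Polynomial.eval_X, Polynomial.eval_ofNat] at h2
  simp only [← Finset.mul_sum, aa_zero, pow_zero, one_mul, add_zero]
  have h3 : (0 : ℝ) < (2 ^ l * l.factorial) ^ 2 := by positivity
  have hpi := Real.pi_pos
  rw [mul_left_comm, ← mul_add, h2]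
  field_simp

lemma sum_weighted (L : ℕ) (w : ℕ → ℝ) (θ φ : ℝ) : ∑ n ∈ Finset.range ((L + 1) ^ 2),
    w (deg n) * Complex.normSq (sphHarmIdx n θ φ) =
    ∑ p ∈ Finset.range (L + 1), w p * ((2 * p + 1) / (4 * π)) := by
  rw [sum_block]
  apply Finset.sum_congr rfl
  intro p _
  rw [← addition p θ φ, Finset.mul_sum]
  apply Finset.sum_congr rfl
  intro j hj
  simp only [Finset.mem_range] at hj
  rw [sphHarmIdx, deg_block p j hj, ord_block p j hj]

/-! ### span -/

/-- the band-limited functions -/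
def VV (L : ℕ) : Submodule ℂ (ℝ → ℝ → ℂ) :=
  Submodule.span ℂ (Set.image sphHarmIdx (Finset.range ((L + 1) ^ 2) : Set ℕ))

lemma sphHarm_mem (L l : ℕ) (m : ℤ) (hm : m.natAbs ≤ l) (hl : l ≤ L) : sphHarm l m ∈ VV L := by
  obtain ⟨j, hj⟩ : ∃ j : ℕ, (j : ℤ) = m + l := ⟨(m + l).toNat, by omega⟩
  have hj2 : j < 2 * l + 1 := by omega
  apply Submodule.subset_span
  refine ⟨l ^ 2 + j, ?_, ?_⟩
  · simp; nlinarith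
  · funext θ φ
    rw [sphHarmIdx, deg_block l j hj2, ord_block l j hj2, hj]; congr 1; ring

/-- polynomial to function -/
def EE (m : ℤ) : Polynomial ℝ →ₗ[ℝ] (ℝ → ℝ → ℂ) where
  toFun R := fun θ φ => ((|sin θ| ^ m.natAbs * R.eval (cos θ) : ℝ) : ℂ) *
      Complex.exp (Complex.I * (m : ℂ) * (φ : ℂ))
  map_add' R S := by
    funext θ φ; simp; ring
  map_smul' c R := by
    funext θ φ; simp; ring

lemma EE_mem (L : ℕ) (m : ℤ) (R : Polynomial ℝ) (h : R.natDegree + m.natAbs ≤ L) :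
    EE m R ∈ VV L := by
  have := span_WW (((VV L).restrictScalars ℝ).comap (EE m)) m.natAbs (L - m.natAbs) ?_ R (by omega)
  · simpa using this
  · intro d hd
    rw [Submodule.mem_comap, Submodule.restrictScalars_mem]
    set l := m.natAbs + d with hl
    have h1 := sphHarm_mem L l m (by omega) (by omega)
    have h2 : EE m (WW l (l + m.natAbs)) = ((kap l m : ℂ)⁻¹) • sphHarm l m := by
      funext θ φ
      have : (kap l m : ℂ) ≠ 0 := by exact_mod_cast kap_ne l m (by omega)
      simp only [EE, LinearMap.coe_mk, AddHom.coe_mk, Pi.smul_apply, sphHarm_eq, smul_eq_mul]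
      push_cast
      field_simp
    rw [h2]
    exact (VV L).smul_mem _ h1

open Polynomial in
lemma sphHarm_mul_mem (L L' l l' : ℕ) (m m' : ℤ) (hm : m.natAbs ≤ l) (hm' : m'.natAbs ≤ l')
    (hl : l ≤ L) (hl' : l' ≤ L') :
    (fun θ φ => sphHarm l m θ φ * sphHarm l' m' θ φ) ∈ VV (L + L') := by
  obtain ⟨j, hj⟩ : ∃ j : ℕ, m.natAbs + m'.natAbs = (m + m').natAbs + 2 * j :=
    ⟨(m.natAbs + m'.natAbs - (m + m').natAbs) / 2, by omega⟩
  set R : ℝ[X] := (1 - X ^ 2) ^ j * (WW l (l + m.natAbs) * WW l' (l' + m'.natAbs)) with hR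
  have hdeg : R.natDegree ≤ 2 * j + ((l - m.natAbs) + (l' - m'.natAbs)) := by
    refine natDegree_mul_le.trans (add_le_add ?_ (natDegree_mul_le.trans
      (add_le_add (WW_natDegree_le _ _) (WW_natDegree_le _ _))))
    refine natDegree_pow_le.trans ?_
    have : (1 - X ^ 2 : ℝ[X]).natDegree ≤ 2 := by compute_degree
    nlinarith
  have h1 := EE_mem (L + L') (m + m') R (by omega)
  have h2 : (fun θ φ => sphHarm l m θ φ * sphHarm l' m' θ φ) =
      ((kap l m * kap l' m' : ℝ) : ℂ) • EE (m + m') R := by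
    funext θ φ
    have h3 : |sin θ| ^ m.natAbs * |sin θ| ^ m'.natAbs =
        |sin θ| ^ (m + m').natAbs * (1 - cos θ ^ 2) ^ j := by
      rw [← pow_add, hj, pow_add, pow_mul, sq_abs, sin_sq]
    have h4 : Complex.exp (Complex.I * ((m + m' : ℤ) : ℂ) * (φ : ℂ)) =
      Complex.exp (Complex.I * (m : ℂ) * (φ : ℂ)) * Complex.exp (Complex.I * (m' : ℂ) * (φ : ℂ)) := by
      rw [← Complex.exp_add]; congr 1; push_cast; ring
    simp only [EE, LinearMap.coe_mk, AddHom.coe_mk, Pi.smul_apply, sphHarm_eq, smul_eq_mul]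
    rw [h4, hR]
    simp only [eval_mul, eval_pow, eval_sub, eval_one, eval_X]
    rw [← mul_assoc (|sin θ| ^ (m + m').natAbs), ← h3]
    push_cast
    ring
  rw [h2]
  exact (VV _).smul_mem _ h1

/-! ### integrals -/

/-- sphere integral -/
def SI (F : ℝ → ℝ → ℂ) : ℂ :=
  ∫ θ in (0 : ℝ)..π, (∫ φ in (0 : ℝ)..(2 * π), F θ φ) * ((Real.sin θ : ℝ) : ℂ)

lemma SI_sum {ι : Type} (s : Finset ι) (c : ι → ℂ) (F : ι → ℝ → ℝ → ℂ)
    (hF : ∀ i ∈ s, Continuous (fun p : ℝ × ℝ => F i p.1 p.2)) :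
    SI (fun θ φ => ∑ i ∈ s, c i * F i θ φ) = ∑ i ∈ s, c i * SI (F i) := by
  unfold SI
  have h1 : ∀ θ, (∫ φ in (0 : ℝ)..(2 * π), ∑ i ∈ s, c i * F i θ φ) * ((Real.sin θ : ℝ) : ℂ) =
      ∑ i ∈ s, c i * ((∫ φ in (0 : ℝ)..(2 * π), F i θ φ) * ((Real.sin θ : ℝ) : ℂ)) := by
    intro θ
    rw [intervalIntegral.integral_finsetSum, Finset.sum_mul]
    · apply Finset.sum_congr rfl
      intro i _
      rw [intervalIntegral.integral_const_mul, mul_assoc]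
    · intro i hi
      have := hF i hi
      have h : Continuous (fun φ => F i θ φ) := this.comp (by fun_prop : Continuous fun φ => (θ, φ))
      exact (continuous_const.mul h).intervalIntegrable _ _
  simp only [h1]
  rw [intervalIntegral.integral_finsetSum]
  · apply Finset.sum_congr rfl
    intro i _
    rw [intervalIntegral.integral_const_mul]
  · intro i hi
    have h : Continuous (fun θ => ∫ φ in (0 : ℝ)..(2 * π), F i θ φ) :=
      intervalIntegral.continuous_parametric_intervalIntegral_of_continuous' (hF i hi) _ _
    have h' : Continuous (fun θ : ℝ => ((Real.sin θ : ℝ) : ℂ)) := by fun_prop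
    exact (continuous_const.mul (h.mul h')).intervalIntegrable _ _

lemma SI_real (F : ℝ → ℝ → ℝ) : SI (fun θ φ => (F θ φ : ℂ)) =
    ((∫ θ in (0 : ℝ)..π, (∫ φ in (0 : ℝ)..(2 * π), F θ φ) * Real.sin θ : ℝ) : ℂ) := by
  unfold SI
  rw [← intervalIntegral.integral_ofReal]
  congr 1; funext θ
  rw [intervalIntegral.integral_ofReal]; push_cast; rfl

lemma exp_integral (k : ℤ) : ∫ φ in (0 : ℝ)..(2 * π), Complex.exp (Complex.I * (k : ℂ) * (φ : ℂ)) =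
    if k = 0 then 2 * (π : ℂ) else 0 := by
  split_ifs with h
  · simp [h]
  · have hk : Complex.I * (k : ℂ) ≠ 0 := by simp [h]
    rw [integral_exp_mul_complex hk]
    have : Complex.exp (Complex.I * k * ((2 * π : ℝ) : ℂ)) = 1 := by
      rw [Complex.exp_eq_one_iff]; exact ⟨k, by push_cast; ring⟩
    rw [this]; simp

open Polynomial in
lemma ortho (l l' : ℕ) (m m' : ℤ) (hm : m.natAbs ≤ l) (hm' : m'.natAbs ≤ l') :
    SI (fun θ φ => sphHarm l m θ φ * conj (sphHarm l' m' θ φ)) =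
      if l = l' ∧ m = m' then 1 else 0 := by
  have h1 : ∀ θ φ, sphHarm l m θ φ * conj (sphHarm l' m' θ φ) =
      ((kap l m * (|sin θ| ^ m.natAbs * (WW l (l + m.natAbs)).eval (cos θ)) *
        (kap l' m' * (|sin θ| ^ m'.natAbs * (WW l' (l' + m'.natAbs)).eval (cos θ))) : ℝ) : ℂ) *
      Complex.exp (Complex.I * ((m - m' : ℤ) : ℂ) * (φ : ℂ)) := by
    intro θ φ
    have h4 : Complex.exp (Complex.I * ((m - m' : ℤ) : ℂ) * (φ : ℂ)) =
      Complex.exp (Complex.I * (m : ℂ) * (φ : ℂ)) *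
        conj (Complex.exp (Complex.I * (m' : ℂ) * (φ : ℂ))) := by
      rw [← Complex.exp_conj, ← Complex.exp_add]; congr 1; simp; ring
    rw [h4, sphHarm_eq, sphHarm_eq, map_mul, Complex.conj_ofReal]
    push_cast; ring
  unfold SI
  simp only [h1, intervalIntegral.integral_const_mul, exp_integral]
  by_cases hmm : m = m'
  · subst hmm
    simp only [sub_self, if_true, and_true]
    have h2 : ∀ θ : ℝ, (((kap l m * (|sin θ| ^ m.natAbs * (WW l (l + m.natAbs)).eval (cos θ)) *
        (kap l' m * (|sin θ| ^ m.natAbs * (WW l' (l' + m.natAbs)).eval (cos θ))) : ℝ) : ℂ) *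
        (2 * π)) * ((sin θ : ℝ) : ℂ) = ((2 * π * (kap l m * kap l' m) *
        (((1 - X ^ 2) ^ m.natAbs * (WW l (l + m.natAbs) * WW l' (l' + m.natAbs))).eval (cos θ) *
          sin θ) : ℝ) : ℂ) := by
      intro θ
      have h3 : |sin θ| ^ m.natAbs * |sin θ| ^ m.natAbs = (1 - cos θ ^ 2) ^ m.natAbs := by
        rw [← mul_pow, abs_mul_abs_self, ← sq, sin_sq]
      simp only [eval_mul, eval_pow, eval_sub, eval_one, eval_X]
      rw [← h3]
      push_cast; ring
    simp only [h2]
    rw [intervalIntegral.integral_ofReal, intervalIntegral.integral_const_mul, JJ_cos]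
    change ((2 * π * (kap l m * kap l' m) * II l l' m.natAbs : ℝ) : ℂ) = _
    split_ifs with hl
    · subst hl
      have h5 := kap_sq l m hm
      have h6 := II_aa l m.natAbs hm
      have h7 := II_norm l
      have hpi := Real.pi_pos
      rw [← h6] at h7
      rw [← sq, h5]
      have h8 : (0 : ℝ) < (2 ^ l * l.factorial) ^ 2 := by positivity
      generalize ((2 : ℝ) ^ l * l.factorial) ^ 2 = B at *
      norm_cast
      push_cast
      field_simp
      linear_combination 2 * h7
    · rw [II_ne l l' _ hl]; simp
  · have : m - m' ≠ 0 := sub_ne_zero.mpr hmm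
    simp [this, hmm]

lemma orthoIdx (n k : ℕ) : SI (fun θ φ => sphHarmIdx n θ φ * conj (sphHarmIdx k θ φ)) =
    if n = k then 1 else 0 := by
  unfold sphHarmIdx
  rw [ortho _ _ _ _ (abs_ord_le n) (abs_ord_le k)]
  congr 1
  apply propext
  constructor
  · rintro ⟨h1, h2⟩
    unfold deg at h1; unfold ord at h2; rw [h1] at h2; omega
  · rintro rfl; simp

lemma idx_continuous (n : ℕ) : Continuous (fun p : ℝ × ℝ => sphHarmIdx n p.1 p.2) :=
  sphHarm_continuous _ _

lemma shc_sum (s : Finset ℕ) (a : ℕ → ℂ) (k : ℕ) (hk : k ∈ s) :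
    shc (fun θ φ => ∑ n ∈ s, a n * sphHarmIdx n θ φ) (deg k) (ord k) = a k := by
  change SI (fun θ φ => (∑ n ∈ s, a n * sphHarmIdx n θ φ) * conj (sphHarmIdx k θ φ)) = _
  simp only [Finset.sum_mul, mul_assoc]
  rw [SI_sum s a (fun n θ φ => sphHarmIdx n θ φ * conj (sphHarmIdx k θ φ))]
  · simp [orthoIdx, hk]
  · intro i _
    exact (idx_continuous i).mul (Complex.continuous_conj.comp (idx_continuous k))

/-- Parseval for finite sums -/
lemma parseval (s : Finset ℕ) (a : ℕ → ℂ) :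
    ∫ θ in (0 : ℝ)..π, (∫ φ in (0 : ℝ)..(2 * π),
      Complex.normSq (∑ n ∈ s, a n * sphHarmIdx n θ φ)) * Real.sin θ =
    ∑ n ∈ s, Complex.normSq (a n) := by
  apply Complex.ofReal_injective
  rw [← SI_real]
  have h1 : ∀ θ φ, ((Complex.normSq (∑ n ∈ s, a n * sphHarmIdx n θ φ) : ℝ) : ℂ) =
      ∑ p ∈ s ×ˢ s, (a p.1 * conj (a p.2)) * (sphHarmIdx p.1 θ φ * conj (sphHarmIdx p.2 θ φ)) := by
    intro θ φ
    rw [Complex.normSq_eq_conj_mul_self, mul_comm, map_sum, Finset.sum_mul_sum, Finset.sum_product]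
    apply Finset.sum_congr rfl; intro i _
    apply Finset.sum_congr rfl; intro j _
    rw [map_mul]; ring
  simp only [h1]
  rw [SI_sum (s ×ˢ s) (fun p => a p.1 * conj (a p.2))
    (fun p θ φ => sphHarmIdx p.1 θ φ * conj (sphHarmIdx p.2 θ φ))]
  · simp only [orthoIdx, Finset.sum_product]
    push_cast
    apply Finset.sum_congr rfl; intro i hi
    simp [hi, Complex.mul_conj]
  · intro i _
    exact (idx_continuous _).mul (Complex.continuous_conj.comp (idx_continuous _))

lemma parseval_conj (s : Finset ℕ) (a : ℕ → ℂ) :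
    ∫ θ in (0 : ℝ)..π, (∫ φ in (0 : ℝ)..(2 * π),
      Complex.normSq (∑ n ∈ s, a n * conj (sphHarmIdx n θ φ))) * Real.sin θ =
    ∑ n ∈ s, Complex.normSq (a n) := by
  have h := parseval s (fun n => conj (a n))
  simp only [Complex.normSq_conj] at h
  rw [← h]
  congr 1; funext θ; congr 2; funext φ
  rw [← Complex.normSq_conj, map_sum]
  simp

lemma parseval_mem (L : ℕ) (F : ℝ → ℝ → ℂ) (hF : F ∈ VV L) :
    ∑ n ∈ Finset.range ((L + 1) ^ 2), Complex.normSq (shc F (deg n) (ord n)) =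
    ∫ θ in (0 : ℝ)..π, (∫ φ in (0 : ℝ)..(2 * π), Complex.normSq (F θ φ)) * Real.sin θ := by
  unfold VV at hF
  rw [Submodule.mem_span_image_finset_iff_exists_fun'] at hF
  obtain ⟨c, rfl⟩ := hF
  have e : (∑ i ∈ Finset.range ((L + 1) ^ 2), c i • sphHarmIdx i) =
      fun θ φ => ∑ n ∈ Finset.range ((L + 1) ^ 2), c n * sphHarmIdx n θ φ := by
    funext θ φ; simp [Finset.sum_apply]
  rw [e, parseval]
  apply Finset.sum_congr rfl
  intro n hn
  rw [shc_sum _ _ _ hn]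

/-- Weighted energy conservation of the SLSHT distribution for a unit-energy zonal
window `h` (zonal coefficients `h⁰_p`, degree ≤ `Lh`, `∑_p |h⁰_p|² = 1`) and
band-limited signal `f` (degree ≤ `Lf`):
`∑_n ∫ |g_f(ŷ; n)|² ds(ŷ) = ∫ |f(x̂)|² E_h(x̂) ds(x̂)` with
`E_h(x̂) = ∫ |(D(ŷ)h)(x̂)|² ds(ŷ)`; moreover, since `h` is zonal, `E_h` is a
constant, independent of `x̂`. -/
theorem slsht_energy_conservation (Lf Lh : ℕ) (fc h0 : ℕ → ℂ)
    (hunit : ∑ p ∈ Finset.range (Lh + 1), Complex.normSq (h0 p) = 1) :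
    let Nf := Lf ^ 2 + 2 * Lf
    let Nh := Lh ^ 2 + 2 * Lh
    let Ng := (Lf + Lh) ^ 2 + 2 * (Lf + Lh)
    let f : ℝ → ℝ → ℂ := fun θ φ => ∑ c ∈ Finset.range (Nf + 1), fc c * sphHarmIdx c θ φ
    let Dh : ℝ → ℝ → ℝ → ℝ → ℂ := fun ϑ φ₀ θ φ =>
      ∑ r ∈ Finset.range (Nh + 1),
        ((Real.sqrt (4 * π / (2 * deg r + 1)) : ℝ) : ℂ) * conj (sphHarmIdx r ϑ φ₀) *
          h0 (deg r) * sphHarmIdx r θ φ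
    let g : ℝ → ℝ → ℕ → ℂ := fun ϑ φ₀ n =>
      shc (fun θ φ => Dh ϑ φ₀ θ φ * f θ φ) (deg n) (ord n)
    let Eh : ℝ → ℝ → ℝ := fun θ φ =>
      ∫ ϑ in (0 : ℝ)..π,
        (∫ φ₀ in (0 : ℝ)..(2 * π), Complex.normSq (Dh ϑ φ₀ θ φ)) * Real.sin ϑ
    (∃ cE : ℝ, ∀ θ φ : ℝ, Eh θ φ = cE) ∧
    (∑ n ∈ Finset.range (Ng + 1),
        ∫ ϑ in (0 : ℝ)..π,
          (∫ φ₀ in (0 : ℝ)..(2 * π), Complex.normSq (g ϑ φ₀ n)) * Real.sin ϑ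
      = ∫ θ in (0 : ℝ)..π,
          (∫ φ in (0 : ℝ)..(2 * π), Complex.normSq (f θ φ) * Eh θ φ) * Real.sin θ) := by
  intro Nf Nh Ng f Dh g Eh
  have eNf : Nf + 1 = (Lf + 1) ^ 2 := by simp only [Nf]; ring
  have eNh : Nh + 1 = (Lh + 1) ^ 2 := by simp only [Nh]; ring
  have eNg : Ng + 1 = (Lf + Lh + 1) ^ 2 := by simp only [Ng]; ring
  have hpi := Real.pi_pos
  let k : ℕ → ℂ := fun r => ((Real.sqrt (4 * π / (2 * deg r + 1)) : ℝ) : ℂ) * h0 (deg r)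
  let w : ℕ → ℝ := fun p => 4 * π / (2 * p + 1) * Complex.normSq (h0 p)
  have hk : ∀ r, Complex.normSq (k r) = w (deg r) := by
    intro r
    simp only [k, w]
    rw [Complex.normSq_mul, Complex.normSq_ofReal, Real.mul_self_sqrt (by positivity)]
  have hDh : ∀ ϑ φ₀ θ φ, Dh ϑ φ₀ θ φ = ∑ r ∈ Finset.range (Nh + 1),
      (k r * sphHarmIdx r θ φ) * conj (sphHarmIdx r ϑ φ₀) := by
    intro ϑ φ₀ θ φ
    apply Finset.sum_congr rfl; intro r _
    simp only [k]; ring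
  have hEh : ∀ θ φ, Eh θ φ = ∑ r ∈ Finset.range (Nh + 1),
      w (deg r) * Complex.normSq (sphHarmIdx r θ φ) := by
    intro θ φ
    simp only [Eh, hDh]
    rw [parseval_conj]
    apply Finset.sum_congr rfl; intro r _
    rw [Complex.normSq_mul, hk]
  refine ⟨⟨1, ?_⟩, ?_⟩
  · intro θ φ
    rw [hEh, eNh, sum_weighted]
    refine Eq.trans ?_ hunit
    apply Finset.sum_congr rfl; intro p _
    simp only [w]
    field_simp
  have hfc : Continuous (fun p : ℝ × ℝ => f p.1 p.2) :=
    continuous_finsetSum _ fun c _ => continuous_const.mul (idx_continuous c)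
  let T : ℕ → ℕ → ℂ := fun r n => shc (fun θ φ => sphHarmIdx r θ φ * f θ φ) (deg n) (ord n)
  have hg : ∀ ϑ φ₀ n, g ϑ φ₀ n = ∑ r ∈ Finset.range (Nh + 1),
      (k r * T r n) * conj (sphHarmIdx r ϑ φ₀) := by
    intro ϑ φ₀ n
    have h1 := SI_sum (Finset.range (Nh + 1)) (fun r => k r * conj (sphHarmIdx r ϑ φ₀))
      (fun r θ φ => sphHarmIdx r θ φ * f θ φ * conj (sphHarm (deg n) (ord n) θ φ))
      (fun r _ => ((idx_continuous r).mul hfc).mul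
        (Complex.continuous_conj.comp (sphHarm_continuous _ _)))
    have h2 : g ϑ φ₀ n = SI (fun θ φ => ∑ r ∈ Finset.range (Nh + 1),
        (k r * conj (sphHarmIdx r ϑ φ₀)) *
        (sphHarmIdx r θ φ * f θ φ * conj (sphHarm (deg n) (ord n) θ φ))) := by
      change SI (fun θ φ => Dh ϑ φ₀ θ φ * f θ φ * conj (sphHarm (deg n) (ord n) θ φ)) = _
      congr 1; funext θ φ
      rw [hDh, Finset.sum_mul, Finset.sum_mul]
      apply Finset.sum_congr rfl; intro r _
      ring
    rw [h2, h1]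
    apply Finset.sum_congr rfl; intro r _
    change _ * T r n = _
    ring
  have hmem : ∀ r ∈ Finset.range (Nh + 1),
      (fun θ φ => sphHarmIdx r θ φ * f θ φ) ∈ VV (Lf + Lh) := by
    intro r hr
    have hdr : deg r ≤ Lh := by
      rw [Finset.mem_range, eNh] at hr
      exact Nat.lt_succ_iff.mp (Nat.sqrt_lt'.mpr hr)
    have e : (fun θ φ => sphHarmIdx r θ φ * f θ φ) = ∑ c ∈ Finset.range (Nf + 1), fc c •
        (fun θ φ => sphHarm (deg c) (ord c) θ φ * sphHarm (deg r) (ord r) θ φ) := by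
      funext θ φ
      simp only [f, Finset.mul_sum, Finset.sum_apply, Pi.smul_apply, smul_eq_mul]
      apply Finset.sum_congr rfl; intro c _
      simp only [sphHarmIdx]; ring
    rw [e]
    refine Submodule.sum_mem _ fun c hc => Submodule.smul_mem _ _ ?_
    have hdc : deg c ≤ Lf := by
      rw [Finset.mem_range, eNf] at hc
      exact Nat.lt_succ_iff.mp (Nat.sqrt_lt'.mpr hc)
    exact sphHarm_mul_mem Lf Lh _ _ _ _ (abs_ord_le c) (abs_ord_le r) hdc hdr
  have hL : ∀ n ∈ Finset.range (Ng + 1), ∫ ϑ in (0 : ℝ)..π,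
      (∫ φ₀ in (0 : ℝ)..(2 * π), Complex.normSq (g ϑ φ₀ n)) * Real.sin ϑ =
      ∑ r ∈ Finset.range (Nh + 1), w (deg r) * Complex.normSq (T r n) := by
    intro n _
    simp only [hg]
    rw [parseval_conj]
    apply Finset.sum_congr rfl; intro r _
    rw [Complex.normSq_mul, hk]
  rw [Finset.sum_congr rfl hL, Finset.sum_comm]
  have hR : ∀ r ∈ Finset.range (Nh + 1),
      ∑ n ∈ Finset.range (Ng + 1), w (deg r) * Complex.normSq (T r n) =
      w (deg r) * ∫ θ in (0 : ℝ)..π, (∫ φ in (0 : ℝ)..(2 * π),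
        Complex.normSq (sphHarmIdx r θ φ * f θ φ)) * Real.sin θ := by
    intro r hr
    rw [← parseval_mem (Lf + Lh) _ (hmem r hr), eNg, Finset.mul_sum]
  rw [Finset.sum_congr rfl hR]
  apply Complex.ofReal_injective
  rw [← SI_real]
  have h3 := SI_sum (Finset.range (Nh + 1)) (fun r => (w (deg r) : ℂ))
    (fun r θ φ => ((Complex.normSq (sphHarmIdx r θ φ * f θ φ) : ℝ) : ℂ))
    (fun r _ => Complex.continuous_ofReal.comp
      (Complex.continuous_normSq.comp ((idx_continuous r).mul hfc)))
  simp only [SI_real] at h3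
  push_cast at h3 ⊢
  rw [← h3]
  congr 1; funext θ φ
  rw [hEh]
  push_cast
  rw [Finset.mul_sum]
  apply Finset.sum_congr rfl; intro r _
  rw [Complex.normSq_mul]
  push_cast; ring

end
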